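/- For p, q ∈ ℕ let d_{p,q} denote the number of B-diagrams G with ω(G) = p and h_f↑(G) = q (this number is finite). Then d_{0,0} = 1, d_{0,q} = 0 for q > 0, and for every p ≥ 1 and q ≥ 0: d_{p,q} = Σ_{i=1}^{p} Σ_{j=0}^{i} Σ_{k=0}^{i} Σ_{ℓ=0}^{j} ℓ!·C(j,ℓ)·C(q−k+ℓ, ℓ)·C(i,j)·C(i,k)·d_{p−i, q−k+ℓ}, where C(·,·) denotes the binomial coefficient and all terms with k > q + ℓ are understood to vanish. -/

import Mathlib

open scoped BigOperators

structure BD where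
  lam : List ℕ
  up : Finset ℕ
  dn : Finset ℕ
  ed : Finset (ℕ × ℕ)
deriving DecidableEq

namespace BD

/-- number of vertices -/
def nv (G : BD) : ℕ := G.lam.length

/-- number of half-edges -/
def omega (G : BD) : ℕ := G.lam.sum

/-- the vertex to which a half-edge belongs -/
def v (G : BD) (k : ℕ) : ℕ :=
  (List.range G.lam.length).countP (fun i => (G.lam.take i).sum < k)

def Valid (G : BD) : Prop :=
  (∀ x ∈ G.lam, 0 < x) ∧
  G.up ⊆ Finset.Icc 1 G.omega ∧
  G.dn ⊆ Finset.Icc 1 G.omega ∧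
  (∀ p ∈ G.ed, p.1 ∈ G.up ∧ p.2 ∈ G.dn ∧ G.v p.1 < G.v p.2) ∧
  (∀ p ∈ G.ed, ∀ q ∈ G.ed, p.1 = q.1 → p = q) ∧
  (∀ p ∈ G.ed, ∀ q ∈ G.ed, p.2 = q.2 → p = q)

def eps : BD := ⟨[], ∅, ∅, ∅⟩

theorem eps_valid : eps.Valid := by
  refine ⟨?_, ?_, ?_, ?_, ?_, ?_⟩ <;> simp [eps, Valid, omega]

def HfUp (G : BD) : Finset ℕ := G.up \ G.ed.image Prod.fst
def HfDn (G : BD) : Finset ℕ := G.dn \ G.ed.image Prod.snd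
def hfUp (G : BD) : ℕ := G.HfUp.card
def hfDn (G : BD) : ℕ := G.HfDn.card
def hc (G : BD) : ℕ :=
  (G.omega - G.ed.card - G.hfUp) + (G.omega - G.ed.card - G.hfDn)

/-- composition of `G'` over `G` along a matching `s` -/
def comp (G G' : BD) (s : Finset (ℕ × ℕ)) : BD where
  lam := G.lam ++ G'.lam
  up := G.up ∪ G'.up.image (· + G.omega)
  dn := G.dn ∪ G'.dn.image (· + G.omega)
  ed := G.ed ∪ s.image (fun p => (p.1, p.2 + G.omega)) ∪
        G'.ed.image (fun p => (p.1 + G.omega, p.2 + G.omega))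

/-- `s` encodes a strictly increasing sequence `a₁ < ⋯ < a_k` of elements of `H_f↑(G)`
matched with pairwise distinct elements `b₁,…,b_k` of `H_f↓(G')`. -/
def Matching (G G' : BD) (s : Finset (ℕ × ℕ)) : Prop :=
  (∀ p ∈ s, p.1 ∈ G.HfUp ∧ p.2 ∈ G'.HfDn) ∧
  (∀ p ∈ s, ∀ q ∈ s, p.1 = q.1 → p = q) ∧
  (∀ p ∈ s, ∀ q ∈ s, p.2 = q.2 → p = q)

open scoped Classical in
noncomputable def matchings (G G' : BD) : Finset (Finset (ℕ × ℕ)) :=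
  (G.HfUp ×ˢ G'.HfDn).powerset.filter (fun s => Matching G G' s)

/-- juxtaposition -/
def juxt (G G' : BD) : BD := comp G G' ∅

def Indiv (G : BD) : Prop :=
  ∀ G₁ G₂ : BD, G₁.Valid → G₂.Valid → G = juxt G₁ G₂ → G₁ = G ∨ G₂ = G

/-- half-edges attached to the vertices in `I` -/
def HI (G : BD) (I : Finset ℕ) : Finset ℕ :=
  (Finset.Icc 1 G.omega).filter (fun k => G.v k ∈ I)

/-- the increasing relabelling bijection -/
def phi (G : BD) (I : Finset ℕ) (k : ℕ) : ℕ := ((G.HI I).filter (· ≤ k)).card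

/-- sub-B-diagram on the set of vertices `I` -/
def sub (G : BD) (I : Finset ℕ) : BD where
  lam := ((List.range G.lam.length).filter (fun i => i + 1 ∈ I)).map (fun i => G.lam.getD i 0)
  up := (G.up ∩ G.HI I).image (G.phi I)
  dn := (G.dn ∩ G.HI I).image (G.phi I)
  ed := (G.ed.filter (fun p => G.v p.1 ∈ I ∧ G.v p.2 ∈ I)).image
          (fun p => (G.phi I p.1, G.phi I p.2))

def Isolated (G : BD) (I : Finset ℕ) : Prop :=
  ∀ p ∈ G.ed, (G.v p.1 ∈ I ↔ G.v p.2 ∈ I)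

def Connected (G : BD) : Prop :=
  ∀ i j : ℕ, 1 ≤ i → i < j → j ≤ G.nv →
    ∃ (k : ℕ) (c : Fin (k + 1) → ℕ × ℕ),
      (∀ ℓ, c ℓ ∈ G.ed) ∧
      (i = G.v (c 0).1 ∨ i = G.v (c 0).2) ∧
      (j = G.v (c (Fin.last k)).1 ∨ j = G.v (c (Fin.last k)).2) ∧
      ∀ ℓ : Fin k,
        G.v (c ℓ.castSucc).1 = G.v (c ℓ.succ).1 ∨ G.v (c ℓ.castSucc).1 = G.v (c ℓ.succ).2 ∨
        G.v (c ℓ.castSucc).2 = G.v (c ℓ.succ).1 ∨ G.v (c ℓ.castSucc).2 = G.v (c ℓ.succ).2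

def IsConnComp (G : BD) (I : Finset ℕ) : Prop :=
  I ⊆ Finset.Icc 1 G.nv ∧ I.Nonempty ∧ (G.sub I).Connected ∧
  ∀ J : Finset ℕ, I ⊆ J → J ⊆ Finset.Icc 1 G.nv → (G.sub J).Connected → J = I

end BD

/-- `d p q` is the number of B-diagrams `G` with `ω(G) = p` and `h_f↑(G) = q`. -/
noncomputable def dBD (p q : ℕ) : ℕ :=
  Set.ncard {G : BD | G.Valid ∧ G.omega = p ∧ G.hfUp = q}

/-!
Remove the top vertex. A B-diagram with half-edges is in exactly one way the composition of a
B-diagram `G₀` with a single vertex `V` above it, along a matching `s` of free up half-edges of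
`G₀` with down half-edges of `V`. If `V` has `i` half-edges, of which `j` are in `E↓` and `k` in
`E↑`, and `s` has `ℓ` edges, then `h_f↑` of the composition is `h_f↑(G₀) + k - ℓ`. So it equals `q`
exactly when `h_f↑(G₀) = q - k + ℓ`, and for such a `G₀` there are `ℓ! C(j,ℓ) C(q-k+ℓ,ℓ)` matchings:
choose the half-edges to be joined on both sides, then a bijection between them. Finally, there are
`C(i,j) C(i,k)` such vertices `V`.
-/

section PartialMatching

open Finset

variable {α β : Type*}

/-- A finite set of pairs is a partial matching if it is the graph of a partial injection, i.e.
distinct pairs differ in both components. -/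
def IsPartialMatching (s : Finset (α × β)) : Prop :=
  Set.InjOn Prod.fst (s : Set (α × β)) ∧ Set.InjOn Prod.snd (s : Set (α × β))

open scoped Classical in
/-- The partial matchings of size `l` between `X` and `Y`. -/
noncomputable def partialMatchings (X : Finset α) (Y : Finset β) (l : ℕ) :
    Finset (Finset (α × β)) :=
  {s ∈ powersetCard l (X ×ˢ Y) | IsPartialMatching s}

theorem mem_partialMatchings {X : Finset α} {Y : Finset β} {l : ℕ} {s : Finset (α × β)} :
    s ∈ partialMatchings X Y l ↔ (s ⊆ X ×ˢ Y ∧ #s = l) ∧ IsPartialMatching s := by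
  simp only [partialMatchings, mem_filter, mem_powersetCard]

/-- The graph of an injection `Y → X`, as a set of pairs in `X × Y`. -/
def embeddingGraph {X : Finset α} {Y : Finset β} (f : Y ↪ X) : Finset (α × β) :=
  univ.map ⟨fun y : Y => ((f y : α), (y : β)), fun _ _ h => Subtype.ext (congrArg Prod.snd h)⟩

theorem mem_embeddingGraph {X : Finset α} {Y : Finset β} {f : Y ↪ X} {e : α × β} :
    e ∈ embeddingGraph f ↔ ∃ y : Y, (↑(f y), ↑y) = e := by
  simp only [embeddingGraph, mem_map, mem_univ, true_and]
  rfl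

theorem embeddingGraph_injective {X : Finset α} {Y : Finset β} :
    Function.Injective (embeddingGraph : (Y ↪ X) → Finset (α × β)) := by
  intro f g hfg
  ext y
  have hy : (↑(f y), ↑y) ∈ embeddingGraph g := hfg ▸ mem_embeddingGraph.2 ⟨y, rfl⟩
  obtain ⟨z, hz⟩ := mem_embeddingGraph.1 hy
  obtain rfl : z = y := Subtype.ext (congrArg Prod.snd hz)
  exact (congrArg Prod.fst hz).symm

theorem embeddingGraph_mem_partialMatchings {X : Finset α} {Y : Finset β} (f : Y ↪ X) :
    embeddingGraph f ∈ partialMatchings X Y #Y := by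
  refine mem_partialMatchings.2 ⟨⟨fun e he => ?_, by simp [embeddingGraph]⟩, ?_, ?_⟩
  · obtain ⟨y, rfl⟩ := mem_embeddingGraph.1 he
    exact mem_product.2 ⟨(f y).2, y.2⟩
  · intro d hd e he hde
    obtain ⟨⟨y, rfl⟩, ⟨z, rfl⟩⟩ := mem_embeddingGraph.1 hd, mem_embeddingGraph.1 he
    rw [f.injective (Subtype.ext hde)]
  · intro d hd e he hde
    obtain ⟨⟨y, rfl⟩, ⟨z, rfl⟩⟩ := mem_embeddingGraph.1 hd, mem_embeddingGraph.1 he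
    rw [Subtype.ext hde]

theorem image_snd_embeddingGraph [DecidableEq β] {X : Finset α} {Y : Finset β} (f : Y ↪ X) :
    (embeddingGraph f).image Prod.snd = Y := by
  ext y
  simp [mem_embeddingGraph]

theorem IsPartialMatching.exists_embeddingGraph_eq [DecidableEq β] {X : Finset α}
    {s : Finset (α × β)} (hs : IsPartialMatching s) (hX : ∀ e ∈ s, e.1 ∈ X) :
    ∃ f : s.image Prod.snd ↪ X, embeddingGraph f = s := by
  have partner (y : s.image Prod.snd) : ∃ x : X, (↑x, ↑y) ∈ s := by
    obtain ⟨e, he, hey⟩ := mem_image.1 y.2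
    exact ⟨⟨e.1, hX e he⟩, hey ▸ he⟩
  choose f hf using partner
  refine ⟨⟨f, fun y z hyz => Subtype.ext ?_⟩, ?_⟩
  · exact congrArg Prod.snd (hs.1 (hf y) (hf z) (congrArg Subtype.val hyz))
  · ext e
    rw [mem_embeddingGraph]
    constructor
    · rintro ⟨y, rfl⟩
      exact hf y
    · intro he
      exact ⟨⟨e.2, mem_image_of_mem _ he⟩, hs.2 (hf _) he rfl⟩

theorem card_partialMatchings_image_snd_eq [DecidableEq β] (X : Finset α) {Y Z : Finset β} {l : ℕ}
    (hZ : Z ∈ powersetCard l Y) :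
    #{s ∈ partialMatchings X Y l | s.image Prod.snd = Z} = (#X).descFactorial l := by
  obtain ⟨hZY, hZl⟩ := mem_powersetCard.1 hZ
  have graph_mem (f : Z ↪ X) :
      embeddingGraph f ∈ {s ∈ partialMatchings X Y l | s.image Prod.snd = Z} := by
    obtain ⟨⟨hsub, hcard⟩, hf⟩ := mem_partialMatchings.1 (embeddingGraph_mem_partialMatchings f)
    exact mem_filter.2 ⟨mem_partialMatchings.2 ⟨⟨hsub.trans (product_subset_product_right hZY),
      hcard.trans hZl⟩, hf⟩, image_snd_embeddingGraph f⟩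
  calc #{s ∈ partialMatchings X Y l | s.image Prod.snd = Z}
      = #(univ : Finset (Z ↪ X)) := by
        refine (card_bij (fun f _ => embeddingGraph f) (fun f _ => graph_mem f)
          (fun f _ g _ h => embeddingGraph_injective h) fun s hs => ?_).symm
        obtain ⟨hs_mem, rfl⟩ := mem_filter.1 hs
        obtain ⟨⟨hsub, -⟩, hs_inj⟩ := mem_partialMatchings.1 hs_mem
        obtain ⟨f, hf⟩ := hs_inj.exists_embeddingGraph_eq fun e he => (mem_product.1 (hsub he)).1
        exact ⟨f, mem_univ f, hf⟩
    _ = (#X).descFactorial l := by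
        simp only [card_univ, Fintype.card_embedding_eq, Fintype.card_coe, hZl]

theorem card_partialMatchings (X : Finset α) (Y : Finset β) (l : ℕ) :
    #(partialMatchings X Y l) = l.factorial * (#Y).choose l * (#X).choose l := by
  classical
  have image_mem : ∀ s ∈ partialMatchings X Y l, s.image Prod.snd ∈ powersetCard l Y := by
    intro s hs
    obtain ⟨⟨hsub, hcard⟩, hs⟩ := mem_partialMatchings.1 hs
    refine mem_powersetCard.2 ⟨?_, (card_image_of_injOn hs.2).trans hcard⟩
    exact image_subset_iff.2 fun e he => (mem_product.1 (hsub he)).2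
  rw [card_eq_sum_card_fiberwise image_mem,
    sum_congr rfl fun Z hZ => card_partialMatchings_image_snd_eq X hZ, sum_const,
    card_powersetCard, smul_eq_mul, Nat.descFactorial_eq_factorial_mul_choose]
  ring

end PartialMatching

namespace BD

open Finset

attribute [ext] BD

variable {G G' : BD} {s : Finset (ℕ × ℕ)}

section Basic

theorem Valid.up_bounds (hG : G.Valid) {x : ℕ} (hx : x ∈ G.up) : 1 ≤ x ∧ x ≤ G.omega :=
  mem_Icc.1 (hG.2.1 hx)

theorem Valid.dn_bounds (hG : G.Valid) {x : ℕ} (hx : x ∈ G.dn) : 1 ≤ x ∧ x ≤ G.omega :=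
  mem_Icc.1 (hG.2.2.1 hx)

theorem Valid.fst_mem_up (hG : G.Valid) {e : ℕ × ℕ} (he : e ∈ G.ed) : e.1 ∈ G.up :=
  (hG.2.2.2.1 e he).1

theorem Valid.snd_mem_dn (hG : G.Valid) {e : ℕ × ℕ} (he : e ∈ G.ed) : e.2 ∈ G.dn :=
  (hG.2.2.2.1 e he).2.1

theorem Valid.v_fst_lt_v_snd (hG : G.Valid) {e : ℕ × ℕ} (he : e ∈ G.ed) : G.v e.1 < G.v e.2 :=
  (hG.2.2.2.1 e he).2.2

theorem Valid.eq_of_fst_eq (hG : G.Valid) {e f : ℕ × ℕ} (he : e ∈ G.ed) (hf : f ∈ G.ed)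
    (h : e.1 = f.1) : e = f :=
  hG.2.2.2.2.1 e he f hf h

theorem Valid.eq_of_snd_eq (hG : G.Valid) {e f : ℕ × ℕ} (he : e ∈ G.ed) (hf : f ∈ G.ed)
    (h : e.2 = f.2) : e = f :=
  hG.2.2.2.2.2 e he f hf h

theorem Valid.bounds (hG : G.Valid) :
    (∀ x ∈ G.up, 1 ≤ x ∧ x ≤ G.omega) ∧ (∀ x ∈ G.dn, 1 ≤ x ∧ x ≤ G.omega) ∧
      ∀ e ∈ G.ed, (1 ≤ e.1 ∧ e.1 ≤ G.omega) ∧ 1 ≤ e.2 ∧ e.2 ≤ G.omega :=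
  ⟨fun _ => hG.up_bounds, fun _ => hG.dn_bounds, fun _ he =>
    ⟨hG.up_bounds (hG.fst_mem_up he), hG.dn_bounds (hG.snd_mem_dn he)⟩⟩

theorem mem_HfUp {x : ℕ} : x ∈ G.HfUp ↔ x ∈ G.up ∧ ∀ e ∈ G.ed, e.1 ≠ x := by
  simp only [HfUp, mem_sdiff, mem_image, not_exists, not_and, ne_eq]

theorem mem_HfDn {x : ℕ} : x ∈ G.HfDn ↔ x ∈ G.dn ∧ ∀ e ∈ G.ed, e.2 ≠ x := by
  simp only [HfDn, mem_sdiff, mem_image, not_exists, not_and, ne_eq]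

theorem mem_matchings : s ∈ matchings G G' ↔ Matching G G' s := by
  simp only [matchings, mem_filter, mem_powerset, and_iff_right_iff_imp]
  exact fun hs e he => mem_product.2 (hs.1 e he)

theorem mem_partialMatchings_HfUp_HfDn {l : ℕ} :
    s ∈ partialMatchings G.HfUp G'.HfDn l ↔ Matching G G' s ∧ #s = l := by
  rw [mem_partialMatchings, and_assoc, and_comm (a := #s = l), ← and_assoc]
  simp only [Finset.subset_iff, mem_product, Matching]
  rfl

theorem v_le_nv (G : BD) (k : ℕ) : G.v k ≤ G.nv :=
  List.countP_le_length.trans_eq List.length_range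

theorem v_pos {k : ℕ} (hk : 0 < k) (hkG : k ≤ G.omega) : 0 < G.v k := by
  have nonempty : 0 < G.lam.length := by
    rw [List.length_pos_iff]
    intro h
    simp only [omega, h, List.sum_nil] at hkG
    lia
  exact List.countP_pos_iff.2 ⟨0, List.mem_range.2 nonempty, decide_eq_true hk⟩

theorem v_mono (G : BD) : Monotone G.v := fun _ _ hab =>
  List.countP_mono_left fun _ _ hi => decide_eq_true ((of_decide_eq_true hi).trans_le hab)

theorem v_congr (h : G.lam = G'.lam) (k : ℕ) : G.v k = G'.v k := by
  rw [v, v, h]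

theorem Valid.fst_lt_snd (hG : G.Valid) {e : ℕ × ℕ} (he : e ∈ G.ed) : e.1 < e.2 :=
  G.v_mono.reflect_lt (hG.v_fst_lt_v_snd he)

end Basic

section Composition

theorem omega_comp : (comp G G' s).omega = G.omega + G'.omega := by
  simp [omega, comp]

theorem nv_comp : (comp G G' s).nv = G.nv + G'.nv := by
  simp [nv, comp]

theorem mem_up_comp {x : ℕ} :
    x ∈ (comp G G' s).up ↔ x ∈ G.up ∨ G.omega ≤ x ∧ x - G.omega ∈ G'.up := by
  simp only [comp, mem_union, mem_image]
  grind

theorem mem_dn_comp {x : ℕ} :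
    x ∈ (comp G G' s).dn ↔ x ∈ G.dn ∨ G.omega ≤ x ∧ x - G.omega ∈ G'.dn := by
  simp only [comp, mem_union, mem_image]
  grind

theorem mem_ed_comp {e : ℕ × ℕ} :
    e ∈ (comp G G' s).ed ↔ e ∈ G.ed ∨ (G.omega ≤ e.2 ∧ (e.1, e.2 - G.omega) ∈ s) ∨
      (G.omega ≤ e.1 ∧ G.omega ≤ e.2 ∧ (e.1 - G.omega, e.2 - G.omega) ∈ G'.ed) := by
  simp only [comp, mem_union, mem_image, or_assoc]
  grind

theorem v_comp_of_le {k : ℕ} (hk : k ≤ G.omega) : (comp G G' s).v k = G.v k := by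
  rw [v, comp, List.length_append, List.range_add, List.countP_append]
  refine (congrArg₂ (· + ·) (List.countP_congr fun i hi => ?_) ?_).trans (add_zero (G.v k))
  · rw [List.take_append_of_le_length (List.mem_range.1 hi).le]
  · have (i : ℕ) : k ≤ G.lam.sum + (G'.lam.take i).sum := hk.trans (Nat.le_add_right _ _)
    simpa [List.take_length_add_append] using fun i _ => this i

theorem v_comp_omega_add {k : ℕ} (hk : 0 < k) :
    (comp G G' s).v (G.omega + k) = G.nv + G'.v k := by
  rw [v, comp, List.length_append, List.range_add, List.countP_append]
  refine congrArg₂ (· + ·) ?_ ?_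
  · conv_rhs => rw [nv, ← List.length_range (n := G.lam.length)]
    refine List.countP_eq_length.2 fun i hi => decide_eq_true ?_
    rw [List.take_append_of_le_length (List.mem_range.1 hi).le]
    have : (G.lam.take i).sum ≤ G.omega := (List.take_sublist i G.lam).sum_le_sum (by simp)
    lia
  · rw [List.countP_map]
    refine List.countP_congr fun i _ => ?_
    simp [omega, List.take_length_add_append]

theorem v_comp_of_lt {k : ℕ} (hk : G.omega < k) :
    (comp G G' s).v k = G.nv + G'.v (k - G.omega) := by
  rw [← v_comp_omega_add (Nat.sub_pos_of_lt hk), Nat.add_sub_cancel' hk.le]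

theorem Matching.bounds (hG : G.Valid) (hG' : G'.Valid) (hs : Matching G G' s) :
    ∀ e ∈ s, e.1 ≤ G.omega ∧ 1 ≤ e.2 ∧ e.2 ≤ G'.omega := fun e he =>
  ⟨(hG.up_bounds (mem_HfUp.1 (hs.1 e he).1).1).2, hG'.dn_bounds (mem_HfDn.1 (hs.1 e he).2).1⟩

theorem v_fst_lt_v_snd_of_mem_ed_comp (hG : G.Valid) (hG' : G'.Valid) (hs : Matching G G' s)
    {e : ℕ × ℕ} (he : e ∈ (comp G G' s).ed) : (comp G G' s).v e.1 < (comp G G' s).v e.2 := by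
  rcases mem_ed_comp.1 he with he | ⟨-, he⟩ | ⟨-, -, he⟩
  · have h₁ := hG.up_bounds (hG.fst_mem_up he)
    have h₂ := hG.dn_bounds (hG.snd_mem_dn he)
    rw [v_comp_of_le h₁.2, v_comp_of_le h₂.2]
    exact hG.v_fst_lt_v_snd he
  · obtain ⟨h₁, h₂, h₂'⟩ := hs.bounds hG hG' _ he
    rw [v_comp_of_le h₁, v_comp_of_lt (by lia)]
    have := G.v_le_nv e.1
    have := G'.v_pos h₂ h₂'
    lia
  · have h₁ := hG'.up_bounds (hG'.fst_mem_up he)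
    have h₂ := hG'.dn_bounds (hG'.snd_mem_dn he)
    rw [v_comp_of_lt (by lia), v_comp_of_lt (by lia)]
    exact Nat.add_lt_add_left (hG'.v_fst_lt_v_snd he) _

theorem eq_of_mem_ed_comp_of_fst_eq (hG : G.Valid) (hG' : G'.Valid) (hs : Matching G G' s)
    {e f : ℕ × ℕ} (he : e ∈ (comp G G' s).ed) (hf : f ∈ (comp G G' s).ed) (hef : e.1 = f.1) :
    e = f := by
  have G_bounds := hG.bounds
  have G'_bounds := hG'.bounds
  have s_bounds := hs.bounds hG hG'
  have not_old : ∀ e ∈ s, ∀ f ∈ G.ed, f.1 ≠ e.1 := fun e he => (mem_HfUp.1 (hs.1 e he).1).2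
  rcases mem_ed_comp.1 he with he | ⟨_, he⟩ | ⟨_, _, he⟩ <;>
    rcases mem_ed_comp.1 hf with hf | ⟨_, hf⟩ | ⟨_, _, hf⟩
  case inl.inl => exact hG.eq_of_fst_eq he hf hef
  case inr.inl.inr.inl =>
    have := hs.2.1 _ he _ hf hef
    grind
  case inr.inr.inr.inr =>
    have := hG'.eq_of_fst_eq he hf (congrArg (· - G.omega) hef)
    grind
  -- The other six cases are contradictory: either the two half-edges lie in different ranges, or
  -- a matched half-edge would not be free.
  all_goals grind

theorem eq_of_mem_ed_comp_of_snd_eq (hG : G.Valid) (hG' : G'.Valid) (hs : Matching G G' s)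
    {e f : ℕ × ℕ} (he : e ∈ (comp G G' s).ed) (hf : f ∈ (comp G G' s).ed) (hef : e.2 = f.2) :
    e = f := by
  have G_bounds := hG.bounds
  have G'_bounds := hG'.bounds
  have s_bounds := hs.bounds hG hG'
  have not_new : ∀ e ∈ s, ∀ f ∈ G'.ed, f.2 ≠ e.2 := fun e he => (mem_HfDn.1 (hs.1 e he).2).2
  rcases mem_ed_comp.1 he with he | ⟨_, he⟩ | ⟨_, _, he⟩ <;>
    rcases mem_ed_comp.1 hf with hf | ⟨_, hf⟩ | ⟨_, _, hf⟩
  case inl.inl => exact hG.eq_of_snd_eq he hf hef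
  case inr.inl.inr.inl =>
    have := hs.2.2 _ he _ hf (congrArg (· - G.omega) hef)
    grind
  case inr.inr.inr.inr =>
    have := hG'.eq_of_snd_eq he hf (congrArg (· - G.omega) hef)
    grind
  -- The other six cases are contradictory: either the two half-edges lie in different ranges, or
  -- a matched half-edge would not be free.
  all_goals grind

theorem comp_valid (hG : G.Valid) (hG' : G'.Valid) (hs : Matching G G' s) :
    (comp G G' s).Valid := by
  have G_bounds := hG.bounds
  have G'_bounds := hG'.bounds
  refine ⟨?_, ?_, ?_, ?_, fun e he f hf => eq_of_mem_ed_comp_of_fst_eq hG hG' hs he hf,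
    fun e he f hf => eq_of_mem_ed_comp_of_snd_eq hG hG' hs he hf⟩
  · exact fun x hx => (List.mem_append.1 hx).elim (hG.1 x) (hG'.1 x)
  · intro x hx
    rw [mem_Icc, omega_comp]
    rw [mem_up_comp] at hx
    grind
  · intro x hx
    rw [mem_Icc, omega_comp]
    rw [mem_dn_comp] at hx
    grind
  · intro e he
    refine ⟨mem_up_comp.2 ?_, mem_dn_comp.2 ?_, v_fst_lt_v_snd_of_mem_ed_comp hG hG' hs he⟩
    all_goals rcases mem_ed_comp.1 he with he | ⟨h, he⟩ | ⟨h, h', he⟩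
    · exact .inl (hG.fst_mem_up he)
    · exact .inl (mem_HfUp.1 (hs.1 _ he).1).1
    · exact .inr ⟨h, hG'.fst_mem_up he⟩
    · exact .inl (hG.snd_mem_dn he)
    · exact .inr ⟨h, (mem_HfDn.1 (hs.1 _ he).2).1⟩
    · exact .inr ⟨h', hG'.snd_mem_dn he⟩

theorem image_fst_ed_comp : (comp G G' s).ed.image Prod.fst =
    G.ed.image Prod.fst ∪ s.image Prod.fst ∪ (G'.ed.image Prod.fst).image (· + G.omega) := by
  simp only [comp, image_union, image_image, Function.comp_def]

theorem HfUp_comp (hG : G.Valid) (hG' : G'.Valid) (hs : Matching G G' s) :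
    (comp G G' s).HfUp = (G.HfUp \ s.image Prod.fst) ∪ G'.HfUp.image (· + G.omega) := by
  have up_le : ∀ x ∈ G.up, x ≤ G.omega := fun x hx => (hG.up_bounds hx).2
  have old_le : ∀ x ∈ G.ed.image Prod.fst, x ≤ G.omega :=
    forall_mem_image.2 fun e he => up_le _ (hG.fst_mem_up he)
  have cross_le : ∀ x ∈ s.image Prod.fst, x ≤ G.omega :=
    forall_mem_image.2 fun e he => (hs.bounds hG hG' _ he).1
  have up_pos : ∀ x ∈ G'.up, 0 < x := fun x hx => (hG'.up_bounds hx).1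
  have new_pos : ∀ x ∈ G'.ed.image Prod.fst, 0 < x :=
    forall_mem_image.2 fun e he => up_pos _ (hG'.fst_mem_up he)
  have up_comp : (comp G G' s).up = G.up ∪ G'.up.image (· + G.omega) := rfl
  rw [HfUp, up_comp, image_fst_ed_comp, HfUp, HfUp]
  generalize G.ed.image Prod.fst = X at *
  generalize G'.ed.image Prod.fst = Y at *
  generalize s.image Prod.fst = Z at *
  ext x
  simp only [mem_sdiff, mem_union, mem_image]
  grind

theorem hfUp_comp_add_card (hG : G.Valid) (hG' : G'.Valid) (hs : Matching G G' s) :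
    (comp G G' s).hfUp + #s = G.hfUp + G'.hfUp := by
  have disjoint : Disjoint (G.HfUp \ s.image Prod.fst) (G'.HfUp.image (· + G.omega)) := by
    refine disjoint_left.2 fun x hx hx' => ?_
    obtain ⟨y, hy, rfl⟩ := mem_image.1 hx'
    have := hG.up_bounds (mem_HfUp.1 (mem_sdiff.1 hx).1).1
    have := hG'.up_bounds (mem_HfUp.1 hy).1
    lia
  have fst_subset : s.image Prod.fst ⊆ G.HfUp := image_subset_iff.2 fun e he => (hs.1 e he).1
  have card_fst : #(s.image Prod.fst) = #s := card_image_of_injOn hs.2.1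
  rw [hfUp, HfUp_comp hG hG' hs, card_union_of_disjoint disjoint,
    card_image_of_injective _ (add_left_injective G.omega), ← card_fst, add_right_comm,
    card_sdiff_add_card_eq_card fst_subset, hfUp, hfUp]

end Composition

section Cut

/-- The number of half-edges on the first `n` vertices of `G`. -/
def cut (G : BD) (n : ℕ) : ℕ := (G.lam.take n).sum

/-- The part of `G` on its first `n` vertices. In a valid `G` every edge `e` has `e.1 < e.2`, so it
lies in this part as soon as its end `e.2` does. -/
def lower (G : BD) (n : ℕ) : BD where
  lam := G.lam.take n
  up := {x ∈ G.up | x ≤ G.cut n}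
  dn := {x ∈ G.dn | x ≤ G.cut n}
  ed := {e ∈ G.ed | e.2 ≤ G.cut n}

/-- The part of `G` above its first `n` vertices, with its half-edges renumbered from `1`. As in
`lower`, one end of an edge suffices, here `e.1`. -/
def upper (G : BD) (n : ℕ) : BD where
  lam := G.lam.drop n
  up := {x ∈ G.up | G.cut n < x}.image (· - G.cut n)
  dn := {x ∈ G.dn | G.cut n < x}.image (· - G.cut n)
  ed := {e ∈ G.ed | G.cut n < e.1}.image fun e => (e.1 - G.cut n, e.2 - G.cut n)

/-- The edges of `G` from its first `n` vertices to the others, the second components being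
numbered as in `G.upper n`. -/
def crossing (G : BD) (n : ℕ) : Finset (ℕ × ℕ) :=
  {e ∈ G.ed | e.1 ≤ G.cut n ∧ G.cut n < e.2}.image fun e => (e.1, e.2 - G.cut n)

variable {n : ℕ}

theorem omega_lower : (G.lower n).omega = G.cut n := rfl

theorem omega_upper : (G.upper n).omega = G.omega - G.cut n := by
  have := G.lam.sum_take_add_sum_drop n
  simp only [omega, cut, upper]
  lia

theorem mem_up_upper {x : ℕ} : x ∈ (G.upper n).up ↔ 0 < x ∧ x + G.cut n ∈ G.up := by
  simp only [upper, mem_image, mem_filter]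
  grind

theorem mem_dn_upper {x : ℕ} : x ∈ (G.upper n).dn ↔ 0 < x ∧ x + G.cut n ∈ G.dn := by
  simp only [upper, mem_image, mem_filter]
  grind

theorem mem_crossing {e : ℕ × ℕ} :
    e ∈ G.crossing n ↔ e.1 ≤ G.cut n ∧ 0 < e.2 ∧ (e.1, e.2 + G.cut n) ∈ G.ed := by
  simp only [crossing, mem_image, mem_filter]
  grind

theorem v_lower {k : ℕ} (hk : k ≤ G.cut n) : (G.lower n).v k = G.v k :=
  (v_comp_of_le (G' := G.upper n) (s := ∅) hk).symm.trans
    (v_congr (G.lam.take_append_drop n) k)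

theorem v_add_cut {k : ℕ} (hk : 0 < k) :
    G.v (k + G.cut n) = (G.lower n).nv + (G.upper n).v k := by
  rw [← v_comp_omega_add (s := ∅) hk, omega_lower, add_comm]
  exact (v_congr (G.lam.take_append_drop n) _).symm

theorem lower_valid (hG : G.Valid) : (G.lower n).Valid := by
  refine ⟨fun x hx => hG.1 x (List.mem_of_mem_take hx), ?_, ?_, ?_, ?_, ?_⟩
  · intro x hx
    obtain ⟨hx, hle⟩ := mem_filter.1 hx
    exact mem_Icc.2 ⟨(hG.up_bounds hx).1, hle⟩
  · intro x hx
    obtain ⟨hx, hle⟩ := mem_filter.1 hx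
    exact mem_Icc.2 ⟨(hG.dn_bounds hx).1, hle⟩
  · intro e he
    obtain ⟨he, hle⟩ := mem_filter.1 he
    have fst_le := (hG.fst_lt_snd he).le.trans hle
    refine ⟨mem_filter.2 ⟨hG.fst_mem_up he, fst_le⟩, mem_filter.2 ⟨hG.snd_mem_dn he, hle⟩, ?_⟩
    rw [v_lower fst_le, v_lower hle]
    exact hG.v_fst_lt_v_snd he
  · exact fun e he f hf => hG.eq_of_fst_eq (mem_filter.1 he).1 (mem_filter.1 hf).1
  · exact fun e he f hf => hG.eq_of_snd_eq (mem_filter.1 he).1 (mem_filter.1 hf).1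

theorem mem_ed_upper (hG : G.Valid) {e : ℕ × ℕ} :
    e ∈ (G.upper n).ed ↔ 0 < e.1 ∧ 0 < e.2 ∧ (e.1 + G.cut n, e.2 + G.cut n) ∈ G.ed := by
  have fst_lt_snd : ∀ e ∈ G.ed, e.1 < e.2 := fun _ => hG.fst_lt_snd
  simp only [upper, mem_image, mem_filter]
  grind

theorem upper_valid (hG : G.Valid) : (G.upper n).Valid := by
  refine ⟨fun x hx => hG.1 x (List.mem_of_mem_drop hx), ?_, ?_, ?_, ?_, ?_⟩
  · intro x hx
    obtain ⟨hpos, hx⟩ := mem_up_upper.1 hx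
    have := hG.up_bounds hx
    rw [mem_Icc, omega_upper]
    lia
  · intro x hx
    obtain ⟨hpos, hx⟩ := mem_dn_upper.1 hx
    have := hG.dn_bounds hx
    rw [mem_Icc, omega_upper]
    lia
  · intro e he
    obtain ⟨hpos₁, hpos₂, he⟩ := (mem_ed_upper hG).1 he
    refine ⟨mem_up_upper.2 ⟨hpos₁, hG.fst_mem_up he⟩,
      mem_dn_upper.2 ⟨hpos₂, hG.snd_mem_dn he⟩, ?_⟩
    have v_lt := hG.v_fst_lt_v_snd he
    rw [v_add_cut hpos₁, v_add_cut hpos₂] at v_lt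
    exact Nat.lt_of_add_lt_add_left v_lt
  · intro e he f hf hef
    have := hG.eq_of_fst_eq ((mem_ed_upper hG).1 he).2.2 ((mem_ed_upper hG).1 hf).2.2
      (congrArg (· + G.cut n) hef)
    simpa [Prod.ext_iff] using this
  · intro e he f hf hef
    have := hG.eq_of_snd_eq ((mem_ed_upper hG).1 he).2.2 ((mem_ed_upper hG).1 hf).2.2
      (congrArg (· + G.cut n) hef)
    simpa [Prod.ext_iff] using this

theorem matching_crossing (hG : G.Valid) :
    Matching (G.lower n) (G.upper n) (G.crossing n) := by
  refine ⟨fun e he => ?_, fun e he f hf hef => ?_, fun e he f hf hef => ?_⟩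
  · obtain ⟨hle, hpos, he⟩ := mem_crossing.1 he
    refine ⟨mem_HfUp.2 ⟨mem_filter.2 ⟨(hG.fst_mem_up he :), hle⟩, fun f hf hfe => ?_⟩,
      mem_HfDn.2 ⟨mem_dn_upper.2 ⟨hpos, (hG.snd_mem_dn he :)⟩, fun f hf hfe => ?_⟩⟩
    · obtain ⟨hf, hfle⟩ := mem_filter.1 hf
      have := hG.eq_of_fst_eq hf he hfe
      grind
    · obtain ⟨hfpos, -, hf⟩ := (mem_ed_upper hG).1 hf
      have := hG.eq_of_snd_eq hf he (congrArg (· + G.cut n) hfe)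
      grind
  · have := hG.eq_of_fst_eq (mem_crossing.1 he).2.2 (mem_crossing.1 hf).2.2 hef
    simpa [Prod.ext_iff] using this
  · have := hG.eq_of_snd_eq (mem_crossing.1 he).2.2 (mem_crossing.1 hf).2.2
      (congrArg (· + G.cut n) hef)
    simpa [Prod.ext_iff] using this

theorem comp_lower_upper (hG : G.Valid) (n : ℕ) :
    comp (G.lower n) (G.upper n) (G.crossing n) = G := by
  ext1
  · exact G.lam.take_append_drop n
  · ext x
    rw [mem_up_comp, mem_up_upper, omega_lower, lower, mem_filter]
    grind
  · ext x
    rw [mem_dn_comp, mem_dn_upper, omega_lower, lower, mem_filter]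
    grind
  · ext e
    rw [mem_ed_comp, mem_crossing, mem_ed_upper hG, omega_lower, lower, mem_filter]
    grind

theorem cut_comp : (comp G G' s).cut G.nv = G.omega := by
  simp [cut, comp, nv, omega]

theorem lower_comp (hG : G.Valid) (hG' : G'.Valid) (hs : Matching G G' s) :
    (comp G G' s).lower G.nv = G := by
  have G_bounds := hG.bounds
  have G'_bounds := hG'.bounds
  have s_bounds := hs.bounds hG hG'
  ext1
  · exact List.take_left
  · ext x
    rw [lower, mem_filter, cut_comp, mem_up_comp]
    grind
  · ext x
    rw [lower, mem_filter, cut_comp, mem_dn_comp]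
    grind
  · ext e
    rw [lower, mem_filter, cut_comp, mem_ed_comp]
    grind

theorem upper_comp (hG : G.Valid) (hG' : G'.Valid) (hs : Matching G G' s) :
    (comp G G' s).upper G.nv = G' := by
  have G_bounds := hG.bounds
  have G'_bounds := hG'.bounds
  have s_bounds := hs.bounds hG hG'
  ext1
  · exact List.drop_left
  · ext x
    rw [mem_up_upper, cut_comp, mem_up_comp]
    grind
  · ext x
    rw [mem_dn_upper, cut_comp, mem_dn_comp]
    grind
  · ext e
    rw [mem_ed_upper (comp_valid hG hG' hs), cut_comp, mem_ed_comp]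
    grind

theorem crossing_comp (hG : G.Valid) (hG' : G'.Valid) (hs : Matching G G' s) :
    (comp G G' s).crossing G.nv = s := by
  have G_bounds := hG.bounds
  have G'_bounds := hG'.bounds
  have s_bounds := hs.bounds hG hG'
  ext e
  rw [mem_crossing, cut_comp, mem_ed_comp]
  grind

end Cut

section Vertex

/-- The B-diagram with a single vertex carrying `i` half-edges, where `A` is the set `E↑` and `B` is
the set `E↓`. -/
def vertex (i : ℕ) (A B : Finset ℕ) : BD := ⟨[i], A, B, ∅⟩

variable {i : ℕ} {A B : Finset ℕ}

theorem omega_vertex : (vertex i A B).omega = i := List.sum_singleton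

theorem hfUp_vertex : (vertex i A B).hfUp = #A := by
  simp [hfUp, HfUp, vertex]

theorem hfDn_vertex : (vertex i A B).hfDn = #B := by
  simp [hfDn, HfDn, vertex]

theorem vertex_valid_iff :
    (vertex i A B).Valid ↔ 0 < i ∧ A ⊆ Icc 1 i ∧ B ⊆ Icc 1 i := by
  simp [Valid, vertex, omega]

theorem Valid.exists_eq_vertex (hG : G.Valid) (hnv : G.nv = 1) : ∃ i A B, G = vertex i A B := by
  obtain ⟨i, hi⟩ := List.length_eq_one_iff.1 hnv
  have ed_eq_empty : G.ed = ∅ := by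
    refine eq_empty_of_forall_notMem fun e he => ?_
    have fst_bounds := hG.up_bounds (hG.fst_mem_up he)
    have v_fst_pos := v_pos fst_bounds.1 fst_bounds.2
    have v_snd_le := G.v_le_nv e.2
    have v_lt := hG.v_fst_lt_v_snd he
    lia
  exact ⟨i, G.up, G.dn, BD.ext hi rfl rfl ed_eq_empty⟩

theorem Valid.exists_comp_vertex_eq (hG : G.Valid) (hpos : 0 < G.omega) :
    ∃ G₀ i A B s, G₀.Valid ∧ (vertex i A B).Valid ∧ Matching G₀ (vertex i A B) s ∧
      comp G₀ (vertex i A B) s = G := by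
  have nv_pos : 0 < G.nv := by
    refine List.length_pos_iff.2 fun hlam => hpos.ne' ?_
    rw [omega, hlam, List.sum_nil]
  have nv_upper : (G.upper (G.nv - 1)).nv = 1 := by
    rw [nv, upper, List.length_drop, ← nv, Nat.sub_sub_self nv_pos]
  obtain ⟨i, A, B, upper_eq⟩ := (upper_valid hG).exists_eq_vertex nv_upper
  exact ⟨G.lower (G.nv - 1), i, A, B, G.crossing (G.nv - 1), lower_valid hG,
    upper_eq ▸ upper_valid hG, upper_eq ▸ matching_crossing hG,
    upper_eq ▸ comp_lower_upper hG _⟩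

theorem comp_vertex_inj {G H : BD} {i j : ℕ} {A B C D : Finset ℕ} {s t : Finset (ℕ × ℕ)}
    (hG : G.Valid) (hV : (vertex i A B).Valid) (hs : Matching G (vertex i A B) s)
    (hH : H.Valid) (hW : (vertex j C D).Valid) (ht : Matching H (vertex j C D) t)
    (h : comp G (vertex i A B) s = comp H (vertex j C D) t) :
    G = H ∧ i = j ∧ A = C ∧ B = D ∧ s = t := by
  have nv_eq : G.nv = H.nv := by
    have := congrArg nv h
    rw [nv_comp, nv_comp] at this
    exact Nat.add_right_cancel this
  have vertex_eq : vertex i A B = vertex j C D := by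
    rw [← upper_comp hG hV hs, ← upper_comp hH hW ht, h, nv_eq]
  refine ⟨?_, ?_, congrArg up vertex_eq, congrArg dn vertex_eq, ?_⟩
  · rw [← lower_comp hG hV hs, h, nv_eq, lower_comp hH hW ht]
  · simpa only [omega_vertex] using congrArg omega vertex_eq
  · rw [← crossing_comp hG hV hs, h, nv_eq, crossing_comp hH hW ht]

end Vertex

section Counting

theorem finite_setOf_valid_omega_eq (p : ℕ) : {G : BD | G.Valid ∧ G.omega = p}.Finite := by
  let fields (G : BD) := (G.lam, G.up, G.dn, G.ed)
  let Xs : Set (Finset ℕ) := (Icc 1 p).powerset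
  let Es : Set (Finset (ℕ × ℕ)) := (Icc 1 p ×ˢ Icc 1 p).powerset
  have mapsTo : Set.MapsTo fields {G : BD | G.Valid ∧ G.omega = p}
      (Set.range (Composition.blocks (n := p)) ×ˢ Xs ×ˢ Xs ×ˢ Es) := by
    rintro G ⟨hG, rfl⟩
    refine ⟨⟨⟨G.lam, fun {x} => hG.1 x, rfl⟩, rfl⟩, mem_powerset.2 hG.2.1,
      mem_powerset.2 hG.2.2.1, mem_powerset.2 fun e he => mem_product.2 ?_⟩
    exact ⟨hG.2.1 (hG.fst_mem_up he), hG.2.2.1 (hG.snd_mem_dn he)⟩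
  refine Set.Finite.of_injOn mapsTo (fun G _ H _ h => ?_) ((Set.finite_range _).prod
    ((finite_toSet _).prod ((finite_toSet _).prod (finite_toSet _))))
  simp only [fields, Prod.mk.injEq] at h
  exact BD.ext h.1 h.2.1 h.2.2.1 h.2.2.2

/-- The B-diagrams with `p` half-edges. -/
noncomputable def diagrams (p : ℕ) : Finset BD :=
  (finite_setOf_valid_omega_eq p).toFinset

theorem mem_diagrams {p : ℕ} : G ∈ diagrams p ↔ G.Valid ∧ G.omega = p :=
  Set.Finite.mem_toFinset _

theorem dBD_eq_card (p q : ℕ) : dBD p q = #{G ∈ diagrams p | G.hfUp = q} := by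
  rw [dBD, ← Set.ncard_coe_finset]
  simp only [coe_filter, mem_diagrams, and_assoc]

theorem diagrams_zero : diagrams 0 = {eps} := by
  ext G
  rw [mem_diagrams, mem_singleton]
  refine ⟨fun ⟨hG, hω⟩ => ?_, fun h => h ▸ ⟨eps_valid, rfl⟩⟩
  have lam_eq_nil : G.lam = [] :=
    List.eq_nil_iff_forall_not_mem.2 fun x hx =>
      (hG.1 x hx).ne' (List.sum_eq_zero_iff.1 hω x hx)
  have up_eq_empty : G.up = ∅ := by simpa [hω] using hG.2.1
  have dn_eq_empty : G.dn = ∅ := by simpa [hω] using hG.2.2.1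
  refine BD.ext lam_eq_nil up_eq_empty dn_eq_empty (eq_empty_of_forall_notMem fun e he => ?_)
  simpa [up_eq_empty] using hG.fst_mem_up he

theorem dBD_zero (q : ℕ) : dBD 0 q = if q = 0 then 1 else 0 := by
  rw [dBD_eq_card, diagrams_zero, filter_singleton]
  simp only [show eps.hfUp = 0 from rfl, eq_comm (a := 0)]
  split_ifs <;> rfl

/-- The pairs of a B-diagram `G` with `n` half-edges and a matching `s` along which composing `V`
over `G` gives a B-diagram with `q` free up half-edges; see `hfUp_comp_add_card`. -/
noncomputable def completions (n q : ℕ) (V : BD) : Finset (Σ _ : BD, Finset (ℕ × ℕ)) :=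
  {x ∈ (diagrams n).sigma (matchings · V) | x.1.hfUp + V.hfUp = q + #x.2}

theorem mem_completions {n q : ℕ} {V : BD} {x : Σ _ : BD, Finset (ℕ × ℕ)} :
    x ∈ completions n q V ↔
      ((x.1.Valid ∧ x.1.omega = n) ∧ Matching x.1 V x.2) ∧ x.1.hfUp + V.hfUp = q + #x.2 := by
  rw [completions, mem_filter, mem_sigma, mem_diagrams, mem_matchings]

theorem comp_mem_diagrams_of_mem_completions {p q i : ℕ} {A B : Finset ℕ}
    {x : Σ _ : BD, Finset (ℕ × ℕ)} (hi : i ≤ p) (hV : (vertex i A B).Valid)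
    (hx : x ∈ completions (p - i) q (vertex i A B)) :
    comp x.1 (vertex i A B) x.2 ∈ {G ∈ diagrams p | G.hfUp = q} := by
  obtain ⟨⟨⟨hG, hω⟩, hs⟩, hcard⟩ := mem_completions.1 hx
  have hfUp_add := hfUp_comp_add_card hG hV hs
  rw [mem_filter, mem_diagrams, omega_comp, hω, omega_vertex]
  exact ⟨⟨comp_valid hG hV hs, Nat.sub_add_cancel hi⟩, by lia⟩

theorem dBD_eq_sum_card_completions {p : ℕ} (hp : 1 ≤ p) (q : ℕ) :
    dBD p q = ∑ i ∈ Icc 1 p, ∑ B ∈ (Icc 1 i).powerset, ∑ A ∈ (Icc 1 i).powerset,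
      #(completions (p - i) q (vertex i A B)) := by
  simp_rw [← card_sigma, dBD_eq_card]
  symm
  have valid_of_mem {i : ℕ} {A B : Finset ℕ} (hi : i ∈ Icc 1 p) (hA : A ∈ (Icc 1 i).powerset)
      (hB : B ∈ (Icc 1 i).powerset) : (vertex i A B).Valid :=
    vertex_valid_iff.2 ⟨(mem_Icc.1 hi).1, mem_powerset.1 hA, mem_powerset.1 hB⟩
  refine card_bij (fun x _ => comp x.2.2.2.1 (vertex x.1 x.2.2.1 x.2.1) x.2.2.2.2) ?_ ?_ ?_
  · rintro ⟨i, B, A, x⟩ hx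
    simp only [mem_sigma] at hx
    obtain ⟨hi, hB, hA, hx⟩ := hx
    exact comp_mem_diagrams_of_mem_completions (mem_Icc.1 hi).2 (valid_of_mem hi hA hB) hx
  · rintro ⟨i, B, A, G, s⟩ hx ⟨j, D, C, H, t⟩ hy h
    simp only [mem_sigma, mem_completions] at hx hy
    obtain ⟨hi, hB, hA, ⟨⟨hG, -⟩, hs⟩, -⟩ := hx
    obtain ⟨hj, hD, hC, ⟨⟨hH, -⟩, ht⟩, -⟩ := hy
    obtain ⟨rfl, rfl, rfl, rfl, rfl⟩ := comp_vertex_inj hG (valid_of_mem hi hA hB) hs hH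
      (valid_of_mem hj hC hD) ht h
    rfl
  · intro G hG
    rw [mem_filter, mem_diagrams] at hG
    obtain ⟨⟨hG, hω⟩, hq⟩ := hG
    obtain ⟨G₀, i, A, B, s, hG₀, hV, hs, rfl⟩ := hG.exists_comp_vertex_eq (by lia)
    obtain ⟨hi, hA, hB⟩ := vertex_valid_iff.1 hV
    have hfUp_add := hfUp_comp_add_card hG₀ hV hs
    rw [omega_comp, omega_vertex] at hω
    refine ⟨⟨i, B, A, G₀, s⟩, ?_, rfl⟩
    simp only [mem_sigma, mem_completions, mem_Icc, mem_powerset]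
    exact ⟨⟨hi, by lia⟩, hB, hA, ⟨⟨hG₀, by lia⟩, hs⟩, by lia⟩

theorem card_filter_completions {n q l : ℕ} {V : BD} (hl : V.hfUp ≤ q + l) :
    #{x ∈ completions n q V | #x.2 = l} =
      l.factorial * V.hfDn.choose l * (q + l - V.hfUp).choose l * dBD n (q + l - V.hfUp) := by
  have fiber_eq : {x ∈ completions n q V | #x.2 = l} =
      {G ∈ diagrams n | G.hfUp = q + l - V.hfUp}.sigma
        fun G => partialMatchings G.HfUp V.HfDn l := by
    ext x
    rw [mem_filter, mem_completions, mem_sigma, mem_filter, mem_diagrams,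
      mem_partialMatchings_HfUp_HfDn]
    grind
  have card_fiber : ∀ G ∈ {G ∈ diagrams n | G.hfUp = q + l - V.hfUp},
      #(partialMatchings G.HfUp V.HfDn l) =
        l.factorial * V.hfDn.choose l * (q + l - V.hfUp).choose l := fun G hG =>
    (card_partialMatchings _ _ l).trans (by rw [← (mem_filter.1 hG).2, hfDn, hfUp])
  rw [fiber_eq, card_sigma, sum_congr rfl card_fiber, sum_const, smul_eq_mul, mul_comm,
    dBD_eq_card]

theorem card_completions (n q : ℕ) (V : BD) :
    #(completions n q V) = ∑ l ∈ range (V.hfDn + 1),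
      if V.hfUp ≤ q + l then
        l.factorial * V.hfDn.choose l * (q + l - V.hfUp).choose l * dBD n (q + l - V.hfUp)
      else 0 := by
  have card_lt : ∀ x ∈ completions n q V, #x.2 ∈ range (V.hfDn + 1) := by
    intro x hx
    obtain ⟨⟨-, hs⟩, -⟩ := mem_completions.1 hx
    exact mem_range_succ_iff.2 <|
      card_le_card_of_injOn Prod.snd (fun e he => (hs.1 e he).2) hs.2.2
  rw [card_eq_sum_card_fiberwise card_lt]
  refine sum_congr rfl fun l _ => ?_
  split_ifs with hl
  · exact card_filter_completions hl
  · refine card_eq_zero.2 (filter_eq_empty_iff.2 fun x hx hcard => hl ?_)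
    obtain ⟨-, hfUp_add⟩ := mem_completions.1 hx
    lia

theorem dBD_eq_sum {p : ℕ} (hp : 1 ≤ p) (q : ℕ) :
    dBD p q = ∑ i ∈ Icc 1 p, ∑ j ∈ range (i + 1), ∑ k ∈ range (i + 1), ∑ l ∈ range (j + 1),
      if k ≤ q + l then
        l.factorial * j.choose l * (q + l - k).choose l * i.choose j * i.choose k *
          dBD (p - i) (q + l - k)
      else 0 := by
  let term (i j k : ℕ) := ∑ l ∈ range (j + 1),
    if k ≤ q + l then
      l.factorial * j.choose l * (q + l - k).choose l * dBD (p - i) (q + l - k)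
    else 0
  calc
    dBD p q = ∑ i ∈ Icc 1 p, ∑ B ∈ (Icc 1 i).powerset, ∑ A ∈ (Icc 1 i).powerset,
        term i #B #A := by
      simp_rw [dBD_eq_sum_card_completions hp, card_completions, hfUp_vertex, hfDn_vertex, term]
    _ = ∑ i ∈ Icc 1 p, ∑ j ∈ range (i + 1), i.choose j *
          ∑ k ∈ range (i + 1), i.choose k * term i j k := by
      refine sum_congr rfl fun i _ => ?_
      simp_rw [sum_powerset_apply_card (term i _)]
      rw [sum_powerset_apply_card fun j =>
        ∑ k ∈ range (#(Icc 1 i) + 1), (#(Icc 1 i)).choose k • term i j k]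
      simp only [Nat.card_Icc, Nat.add_sub_cancel, smul_eq_mul]
    _ = _ := by
      simp_rw [term, mul_sum, mul_ite, mul_zero]
      refine sum_congr rfl fun i _ => sum_congr rfl fun j _ => sum_congr rfl fun k _ =>
        sum_congr rfl fun l _ => if_congr Iff.rfl ?_ rfl
      ring

end Counting

end BD

/-- the sets counted by `d_{p,q}` are finite, `d_{0,0} = 1`,
`d_{0,q} = 0` for `q > 0`, and the `d_{p,q}` satisfy the recursion
`d_{p,q} = Σ_{i=1}^{p} Σ_{j=0}^{i} Σ_{k=0}^{i} Σ_{ℓ=0}^{j}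
   ℓ!·C(j,ℓ)·C(q−k+ℓ,ℓ)·C(i,j)·C(i,k)·d_{p−i,q−k+ℓ}`,
the terms with `k > q + ℓ` being understood to vanish. -/
theorem dBD_recursion :
    (∀ p q : ℕ, {G : BD | G.Valid ∧ G.omega = p ∧ G.hfUp = q}.Finite) ∧
    dBD 0 0 = 1 ∧ (∀ q : ℕ, 0 < q → dBD 0 q = 0) ∧
    (∀ p q : ℕ, 1 ≤ p →
      dBD p q =
        ∑ i ∈ Finset.Icc 1 p, ∑ j ∈ Finset.range (i + 1), ∑ k ∈ Finset.range (i + 1),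
          ∑ l ∈ Finset.range (j + 1),
            if k ≤ q + l then
              Nat.factorial l * Nat.choose j l * Nat.choose (q + l - k) l *
                Nat.choose i j * Nat.choose i k * dBD (p - i) (q + l - k)
            else 0) := by
  refine ⟨fun p q => ?_, BD.dBD_zero 0, fun q hq => (BD.dBD_zero q).trans (if_neg hq.ne'),
    fun p q hp => BD.dBD_eq_sum hp q⟩
  exact (BD.finite_setOf_valid_omega_eq p).subset fun G hG => ⟨hG.1, hG.2.1⟩
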